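/- arXiv:1304.6843 — 2 statements merged into one kernel-verified Lean document; each statement's English description precedes it below -/
import Mathlib

section
/- Let G = G₁ × ⋯ × G_n be a product of n ≥ 1 infinite groups of type FP∞. Then H^p(G, ℤ[G]) = 0 for all p ≤ n - 1. -/
open CategoryTheory

/-- A group `G` is of type `FP∞` over `ℤ`: the trivial module `ℤ` admits a projective
resolution by `ℤ[G]`-modules which are finitely generated in every degree. -/
def IsFPInfinity (G : Type) [Group G] : Prop :=
  ∃ P : ProjectiveResolution (Rep.trivial ℤ G ℤ),
    ∀ i : ℕ, Module.Finite (MonoidAlgebra ℤ G)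
      ((Rep.equivalenceModuleMonoidAlgebra.functor.obj (P.complex.X i)) :
        ModuleCat (MonoidAlgebra ℤ G))

universe u

namespace groupCohomology

open Rep

variable {k G : Type u} [CommRing k] [Group G]

lemma subsingleton_iff (A : Rep k G) (n : ℕ) :
    Subsingleton (groupCohomology A n) ↔
      ∀ x : (inhomogeneousCochains A).X n, (inhomogeneousCochains A).d n (n + 1) x = 0 →
        ∃ y : (inhomogeneousCochains A).X ((ComplexShape.up ℕ).prev n),
          (inhomogeneousCochains A).d _ n y = x := by
  rw [← ModuleCat.isZero_iff_subsingleton, groupCohomology,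
    ← HomologicalComplex.exactAt_iff_isZero_homology,
    HomologicalComplex.exactAt_iff' _ _ n (n + 1) rfl (by simp), ShortComplex.moduleCat_exact_iff]
  rfl

lemma subsingleton_of_jointly_bijective {ι : Type*} {Q P : Rep k G} (e : ι → (Q ⟶ P))
    (he : Function.Bijective fun (q : Q) i => (e i).hom q) (n : ℕ)
    (h : Subsingleton (groupCohomology P n)) : Subsingleton (groupCohomology Q n) := by
  rw [subsingleton_iff] at h ⊢
  have comm (i : ι) (a b : ℕ) (x : (inhomogeneousCochains Q).X a) :
      (inhomogeneousCochains P).d a b ((cochainsMap (MonoidHom.id G) (e i)).f a x) =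
        (cochainsMap (MonoidHom.id G) (e i)).f b ((inhomogeneousCochains Q).d a b x) :=
    congr($((cochainsMap (MonoidHom.id G) (e i)).comm a b) x)
  intro x hx
  choose y hy using fun i => h ((cochainsMap (MonoidHom.id G) (e i)).f n x) (by
    rw [comm, hx, map_zero])
  choose z hz using fun g => he.2 fun i => y i g
  refine ⟨z, funext fun g => he.1 (funext fun i => ?_)⟩
  have : (cochainsMap (MonoidHom.id G) (e i)).f _ z = y i := funext fun g => congr_fun (hz g) i
  exact congr_fun ((comm i _ n z).symm.trans ((congr_arg _ this).trans (hy i))) g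

lemma subsingleton_of_iso {A B : Rep k G} (e : A ≅ B) {n : ℕ}
    (h : Subsingleton (groupCohomology A n)) : Subsingleton (groupCohomology B n) :=
  @Equiv.subsingleton _ _ ((functor k G n).mapIso e).toLinearEquiv.toEquiv.symm h

end groupCohomology

namespace Rep

variable {k G : Type u} [CommRing k] [Group G]

lemma shortExact_mk {A B C : Rep k G} (f : A ⟶ B) (g : B ⟶ C) (w : f ≫ g = 0)
    (hf : Function.Injective f.hom) (hg : Function.Surjective g.hom)
    (hfg : ∀ b, g.hom b = 0 → ∃ a, f.hom a = b) : (ShortComplex.mk f g w).ShortExact where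
  exact := by
    rw [← ShortComplex.exact_map_iff_of_faithful _ (forget₂ (Rep k G) (ModuleCat k)),
      ShortComplex.moduleCat_exact_iff]
    exact hfg
  mono_f := (mono_iff_injective _).2 hf
  epi_g := (epi_iff_surjective _).2 hg

/-- The quotient of a representation by the range of a morphism. -/
noncomputable abbrev coker {A B : Rep k G} (f : A ⟶ B) : Rep k G :=
  quotient B f.hom.toLinearMap.range fun g => by
    rintro _ ⟨a, rfl⟩
    exact ⟨A.ρ g a, hom_comm_apply f g a⟩

/-- The short complex formed by a morphism and the projection to its cokernel. -/
noncomputable abbrev cokerShortComplex {A B : Rep k G} (f : A ⟶ B) : ShortComplex (Rep k G) :=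
  ShortComplex.mk (X₃ := coker f) f (mkQ _ _ _) <| by
    ext a
    exact (Submodule.Quotient.mk_eq_zero _).2 ⟨a, rfl⟩

lemma cokerShortComplex_shortExact {A B : Rep k G} (f : A ⟶ B)
    (hf : Function.Injective f.hom) : (cokerShortComplex f).ShortExact :=
  shortExact_mk _ _ _ hf (Submodule.mkQ_surjective _) fun _ hb =>
    (Submodule.Quotient.mk_eq_zero _).1 hb

lemma exists_of_shortExact {X : ShortComplex (Rep k G)} (hX : X.ShortExact) (b : X.X₂)
    (hb : X.g.hom b = 0) : ∃ a, X.f.hom a = b :=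
  (ShortComplex.moduleCat_exact_iff _).1
    ((ShortComplex.exact_map_iff_of_faithful _ (forget₂ (Rep k G) (ModuleCat k))).2 hX.exact) b hb

lemma coind_map_shortExact (N : Subgroup G) {X : ShortComplex (Rep k N)} (hX : X.ShortExact) :
    (ShortComplex.mk (coindMap N.subtype X.f) (coindMap N.subtype X.g) (by
      ext φ h
      exact congr_arg (fun f => f.hom (φ.1 h)) X.zero)).ShortExact := by
  have := hX.mono_f
  have := hX.epi_g
  have hf := (mono_iff_injective X.f).1 inferInstance
  refine shortExact_mk _ _ _ (fun φ ψ h => Subtype.ext (funext fun g => hf ?_))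
    ((epi_iff_surjective _).1 (inferInstanceAs (Epi ((coindFunctor k N.subtype).map X.g))))
    fun φ hφ => ?_
  · exact congr_fun (congr_arg Subtype.val h) g
  · choose a ha using fun g => exists_of_shortExact hX (φ.1 g)
      (congr_fun (congr_arg Subtype.val hφ) g)
    refine ⟨⟨a, fun n g => hf ?_⟩, Subtype.ext (funext ha)⟩
    rw [ha, φ.2 n g, hom_comm_apply, ha]

end Rep

namespace groupCohomology

open Rep

variable {k G : Type u} [CommRing k] [Group G] {X : ShortComplex (Rep k G)}

lemma exists_δ_eq (hX : X.ShortExact) {n : ℕ} (x : groupCohomology X.X₁ (n + 1))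
    (hx : map (MonoidHom.id G) X.f (n + 1) x = 0) : ∃ y, δ hX n (n + 1) rfl y = x :=
  (ShortComplex.moduleCat_exact_iff _).1 (mapShortComplex₁_exact hX rfl) x hx

lemma exists_map_g_eq (hX : X.ShortExact) {n : ℕ} (x : groupCohomology X.X₃ n)
    (hx : δ hX n (n + 1) rfl x = 0) : ∃ y, map (MonoidHom.id G) X.g n y = x :=
  (ShortComplex.moduleCat_exact_iff _).1 (mapShortComplex₃_exact hX rfl) x hx

lemma map_f_δ (hX : X.ShortExact) {n : ℕ} (x : groupCohomology X.X₃ n) :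
    map (MonoidHom.id G) X.f (n + 1) (δ hX n (n + 1) rfl x) = 0 :=
  congr($((mapShortComplex₁ hX rfl).zero) x)

/-- If `Hⁱ(G, X₃) = 0` for `i < n`, then `Hⁿ(G, X₁) → Hⁿ(G, X₂)` is injective. -/
lemma map_f_injective (hX : X.ShortExact) {n : ℕ}
    (h : ∀ i, i < n → Subsingleton (groupCohomology X.X₃ i)) :
    Function.Injective (map (MonoidHom.id G) X.f n) := by
  cases n with
  | zero =>
    have := hX.mono_f
    exact (ModuleCat.mono_iff_injective _).1 (mono_map_0_of_mono X.f)
  | succ n =>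
    refine (injective_iff_map_eq_zero _).2 fun x hx => ?_
    obtain ⟨y, rfl⟩ := exists_δ_eq hX x hx
    have := h n n.lt_succ_self
    rw [Subsingleton.elim y 0, map_zero]

lemma map_id_comp_apply {A B C : Rep k G} (f : A ⟶ B) (g : B ⟶ C) (n : ℕ)
    (x : groupCohomology A n) :
    map (MonoidHom.id G) (f ≫ g) n x = map (MonoidHom.id G) g n (map (MonoidHom.id G) f n x) :=
  congr($(map_id_comp f g n) x)

lemma map_id_apply {A : Rep k G} (n : ℕ) (x : groupCohomology A n) :
    map (MonoidHom.id G) (𝟙 A) n x = x :=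
  congr($(map_id n) x)

lemma subsingleton_of_shortExact_of_retraction (hX : X.ShortExact) (r : X.X₂ ⟶ X.X₁)
    (hr : X.f ≫ r = 𝟙 X.X₁) {n : ℕ} (h : Subsingleton (groupCohomology X.X₂ n)) :
    Subsingleton (groupCohomology X.X₃ n) := by
  refine subsingleton_of_forall_eq 0 fun x => ?_
  have hδ : δ hX n (n + 1) rfl x = 0 := by
    rw [← map_id_apply (n + 1) (δ hX n (n + 1) rfl x), ← hr, map_id_comp_apply, map_f_δ, map_zero]
  obtain ⟨y, rfl⟩ := exists_map_g_eq hX x hδ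
  rw [Subsingleton.elim y 0, map_zero]

end groupCohomology

namespace Rep

variable {k G : Type u} [CommRing k] [Group G] {N K : Subgroup G}

/-- The unit `M ⟶ coind (res M)`, sending `m` to the function `g ↦ g • m`. -/
noncomputable abbrev toCoindRes (N : Subgroup G) (M : Rep.{u} k G) :
    M ⟶ coind N.subtype (res N.subtype M) :=
  resCoindToHom N.subtype M _ (𝟙 _)

lemma toCoindRes_injective (N : Subgroup G) (M : Rep.{u} k G) :
    Function.Injective (toCoindRes N M).hom := fun a b h => by
  have : M.ρ 1 a = M.ρ 1 b := congr_fun (congr_arg Subtype.val h) 1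
  simpa using this

/-- Evaluation at an element commuting with the subgroup, as a morphism from a coinduced
representation. -/
noncomputable def coindEval (P : Rep.{u} k N) (x : G) (hx : ∀ n ∈ N, Commute n x) :
    res N.subtype (coind N.subtype P) ⟶ P :=
  ofHom ⟨LinearMap.proj x ∘ₗ (P.ρ.coindV N.subtype).subtype, fun n => by
    ext φ
    have := φ.2 n x
    rw [Subgroup.subtype_apply, (hx n n.2).eq] at this
    exact this⟩

lemma coindEval_apply (P : Rep.{u} k N) (x : G) (hx : ∀ n ∈ N, Commute n x)
    (φ : coind N.subtype P) : (coindEval P x hx).hom φ = φ.1 x := rfl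

lemma coindEval_jointly_bijective (hcomm : ∀ n ∈ N, ∀ x ∈ K, Commute n x)
    (hc : N.IsComplement' K) (P : Rep.{u} k N) :
    Function.Bijective fun (φ : res N.subtype (coind N.subtype P)) (x : K) =>
      (coindEval P x fun n hn => hcomm n hn x x.2).hom φ := by
  obtain ⟨e, he⟩ : ∃ e : G → N × K, ∀ g, ((e g).1 : G) * (e g).2 = g :=
    ⟨fun g => (Equiv.ofBijective _ hc).symm g, fun g => (Equiv.ofBijective _ hc).apply_symm_apply g⟩
  refine ⟨fun φ ψ h => Subtype.ext (funext fun g => ?_), fun f => ?_⟩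
  · rw [← he g]
    refine (φ.2 (e g).1 (e g).2).trans (.trans ?_ (ψ.2 (e g).1 (e g).2).symm)
    exact congr_arg _ (congr_fun h (e g).2)
  · have hmul (n : N) (g : G) : e (n * g) = (n * (e g).1, (e g).2) := hc.1 <| by
      simp only [he, Subgroup.coe_mul, mul_assoc]
    have hK (x : K) : e x = (1, x) := hc.1 <| by simp [he]
    refine ⟨⟨fun g => P.ρ (e g).1 (f (e g).2), fun n g => ?_⟩, funext fun x => ?_⟩
    · simp [hmul]
    · refine (coindEval_apply P x _ _).trans ?_
      simp [hK]

end Rep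

namespace groupCohomology

open Rep

variable {k G : Type u} [CommRing k] [Group G] {N K : Subgroup G}

lemma subsingleton_res_coker_toCoindRes (hcomm : ∀ n ∈ N, ∀ x ∈ K, Commute n x)
    (hc : N.IsComplement' K) (M : Rep.{u} k G) (n : ℕ)
    (h : ∀ p < n, Subsingleton (groupCohomology (res N.subtype M) p)) :
    ∀ p < n, Subsingleton (groupCohomology (res N.subtype (coker (toCoindRes N M))) p) := by
  intro p hp
  refine subsingleton_of_shortExact_of_retraction ((shortExact_res N.subtype).2
    (cokerShortComplex_shortExact (toCoindRes N M) (toCoindRes_injective N M)))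
    (coindEval (res N.subtype M) 1 fun n _ => Commute.one_right n) ?_
    (subsingleton_of_jointly_bijective _
      (coindEval_jointly_bijective hcomm hc (res N.subtype M)) p (h p hp))
  ext m
  exact congr($(map_one M.ρ) m)

/-- If `N` is a direct factor of `G` and `Hᵖ(N, M) = 0` for `p < n`, then `Hᵖ(G, M) = 0` for
`p < n`. -/
lemma subsingleton_of_res (hcomm : ∀ n ∈ N, ∀ x ∈ K, Commute n x)
    (hc : N.IsComplement' K) (n : ℕ) (M : Rep.{u} k G)
    (h : ∀ p < n, Subsingleton (groupCohomology (res N.subtype M) p)) :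
    ∀ p < n, Subsingleton (groupCohomology M p) := by
  intro p
  induction p using Nat.strong_induction_on generalizing M with
  | _ p ih =>
    intro hp
    have hX := cokerShortComplex_shortExact (toCoindRes N M) (toCoindRes_injective N M)
    have h₂ : Subsingleton (groupCohomology (coind N.subtype (res N.subtype M)) p) :=
      @Equiv.subsingleton _ _ (coindIso (res N.subtype M) p).toLinearEquiv.toEquiv (h p hp)
    exact (map_f_injective hX fun i hi => ih i hi _
      (subsingleton_res_coker_toCoindRes hcomm hc M n h) (hi.trans hp)).subsingleton

/-- If `N` is a direct factor of `G` and `Hᵖ(N, M) = 0` for `p < n`, then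
`Hⁿ(G, M) → Hⁿ(G, coind (res M))` is injective. -/
lemma map_toCoindRes_injective (hcomm : ∀ n ∈ N, ∀ x ∈ K, Commute n x)
    (hc : N.IsComplement' K) (n : ℕ) (M : Rep.{u} k G)
    (h : ∀ p < n, Subsingleton (groupCohomology (res N.subtype M) p)) :
    Function.Injective (map (MonoidHom.id G) (toCoindRes N M) n) :=
  map_f_injective (cokerShortComplex_shortExact _ (toCoindRes_injective N M))
    (subsingleton_of_res hcomm hc n _ (subsingleton_res_coker_toCoindRes hcomm hc M n h))

end groupCohomology

namespace Rep

variable {k G : Type u} [CommRing k] [Group G] {N : Subgroup G}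

/-- Left translation of functions by an element commuting with `N`, as an endomorphism of a
representation coinduced from `N`. -/
noncomputable def coindTranslate (P : Rep.{u} k N) (s : G) (hs : ∀ n ∈ N, Commute n s) :
    coind N.subtype P ⟶ coind N.subtype P :=
  ofHom ⟨(LinearMap.funLeft k P (s * ·)).restrict fun φ hφ n g => by
      have := hφ n (s * g)
      rw [Subgroup.subtype_apply, ← mul_assoc, (hs n n.2).eq, mul_assoc] at this
      exact this,
    fun g => by
      ext φ h
      exact congr_arg φ.1 (mul_assoc s h g)⟩

end Rep

namespace groupCohomology

open Rep

variable {k G : Type u} [CommRing k] [Group G] {N : Subgroup G}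

lemma subsingleton_coind {P : Rep k N} {n : ℕ} (h : Subsingleton (groupCohomology P n)) :
    Subsingleton (groupCohomology (coind N.subtype P) n) :=
  @Equiv.subsingleton _ _ (coindIso P n).toLinearEquiv.toEquiv h

lemma map_coindTranslate (s : G) (hs : ∀ n ∈ N, Commute n s) (P : Rep.{u} k N) (p : ℕ)
    (x : groupCohomology (coind N.subtype P) p) :
    map (MonoidHom.id G) (coindTranslate P s hs) p x = x := by
  induction p generalizing P with
  | zero =>
    apply (H0Iso (coind N.subtype P)).toLinearEquiv.injective
    refine (congr($(map_id_comp_H0Iso_hom (coindTranslate P s hs)) x)).trans ?_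
    refine Subtype.ext (Subtype.ext (funext fun g => ?_))
    set φ := (H0Iso (coind N.subtype P)).hom x
    have := congr_fun (congr_arg Subtype.val (φ.2 (g⁻¹ * s * g))) g
    refine Eq.trans ?_ this
    refine congr_arg φ.1.1 ?_
    simp [mul_assoc]
  | succ p ih =>
    have hX := cokerShortComplex_shortExact _ (toCoindRes_injective (⊥ : Subgroup N) P)
    have hY := coind_map_shortExact N hX
    have h0 : Subsingleton (groupCohomology (coind (⊥ : Subgroup N).subtype
        (res (⊥ : Subgroup N).subtype P)) (p + 1)) :=
      subsingleton_coind (ModuleCat.isZero_iff_subsingleton.1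
        (isZero_groupCohomology_succ_of_subsingleton _ p))
    obtain ⟨y, rfl⟩ := exists_δ_eq hY x (@Subsingleton.elim _ (subsingleton_coind h0) _ _)
    refine (congr($(δ_naturality hY hY
      (ShortComplex.homMk (coindTranslate _ s hs) (coindTranslate _ s hs) (coindTranslate _ s hs)
        rfl rfl) p (p + 1) rfl) y)).trans ?_
    exact congr_arg (δ hY p (p + 1) rfl) (ih _ y)

end groupCohomology

lemma CategoryTheory.Functor.map_sum_sub_id_comp_apply {C : Type*} [Category* C] [Preadditive C]
    {R : Type*} [Ring R] (F : C ⥤ ModuleCat R) [F.Additive] {ι : Type*} [Fintype ι] {P Q : C}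
    (σ : ι → (P ⟶ P)) (j : ι → (P ⟶ Q)) (y : F.obj P) (hy : ∀ i, F.map (σ i) y = y) :
    F.map (∑ i, (σ i - 𝟙 P) ≫ j i) y = 0 := by
  rw [F.map_sum]
  change (∑ i, F.map ((σ i - 𝟙 P) ≫ j i)).hom y = 0
  rw [ModuleCat.hom_sum, LinearMap.sum_apply]
  refine Finset.sum_eq_zero fun i _ => ?_
  simp [hy]

namespace groupCohomology

open Rep

variable {k G : Type u} [CommRing k] [Group G] {N : Subgroup G}

instance (n : ℕ) : (functor k G n).Additive :=
  inferInstanceAs (cochainsFunctor k G ⋙ HomologicalComplex.homologyFunctor _ _ n).Additive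

lemma map_sum_sub_id_comp_eq_zero {ι : Type*} [Fintype ι] {P Q : Rep k N} (σ : ι → (P ⟶ P))
    (j : ι → (P ⟶ Q)) (n : ℕ) (y : groupCohomology (coind N.subtype P) n)
    (hy : ∀ i, map (MonoidHom.id G) (coindMap N.subtype (σ i)) n y = y) :
    map (MonoidHom.id G) (coindMap N.subtype (∑ i, (σ i - 𝟙 P) ≫ j i)) n y = 0 := by
  have : (coindFunctor k N.subtype).Additive := ⟨rfl⟩
  exact (coindFunctor k N.subtype ⋙ functor k G n).map_sum_sub_id_comp_apply σ j y hy

end groupCohomology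

namespace Rep

variable (k G : Type u) [CommRing k] [Group G]

/-- The representation of `G` on the finitely supported functions `G →₀ A`. -/
noncomputable abbrev finsuppRegular (A : Type u) [AddCommGroup A] [Module k A] : Rep k G :=
  of (X := G →₀ A)
    { toFun g := (Finsupp.domLCongr (Equiv.mulLeft g)).toLinearMap
      map_one' := LinearMap.ext fun f => Finsupp.ext fun x => congr_arg f (by simp : 1⁻¹ * x = x)
      map_mul' g h := LinearMap.ext fun f => Finsupp.ext fun x =>
        congr_arg f (by simp [mul_assoc] : (g * h)⁻¹ * x = h⁻¹ * (g⁻¹ * x)) }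

variable {k G} {A B : Type u} [AddCommGroup A] [Module k A] [AddCommGroup B] [Module k B]

lemma finsuppRegular_ρ_apply (g h : G) (f : finsuppRegular k G A) :
    ((finsuppRegular k G A).ρ g f : G →₀ A) h = (f : G →₀ A) (g⁻¹ * h) := by
  simp

variable (k G) in
/-- The morphism of representations on finitely supported functions induced by a linear map. -/
noncomputable def finsuppRegularMap (f : A →ₗ[k] B) :
    finsuppRegular k G A ⟶ finsuppRegular k G B :=
  ofHom ⟨Finsupp.mapRange.linearMap f, fun g => LinearMap.ext fun a => by ext; simp⟩

variable {N K : Subgroup G}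

variable (k G) in
lemma finsuppRegular_shortExact (f : A →ₗ[k] B) (hf : Function.Injective f) :
    (ShortComplex.mk (finsuppRegularMap k G f) (finsuppRegularMap k G f.range.mkQ) (by
      ext a : 4
      refine Finsupp.ext (M := B ⧸ f.range) fun g => ?_
      exact (Submodule.Quotient.mk_eq_zero _).2 ⟨_, rfl⟩)).ShortExact := by
  refine shortExact_mk _ _ _ (Finsupp.mapRange_injective f (map_zero f) hf)
    (Finsupp.mapRange_surjective f.range.mkQ (map_zero _) (Submodule.mkQ_surjective _))
    fun b hb => ?_
  have h0 : Function.invFun f 0 = 0 := by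
    simpa using Function.leftInverse_invFun hf 0
  refine ⟨Finsupp.mapRange (Function.invFun f) h0 (b : G →₀ B), Finsupp.ext fun g => ?_⟩
  exact Function.invFun_eq ((Submodule.Quotient.mk_eq_zero f.range).1 (DFunLike.congr_fun hb g))

variable (k G) in
lemma sum_finsuppRegularMap_comp_single {ι : Type u} [Fintype ι] [DecidableEq ι]
    (f : ι → (A →ₗ[k] B)) :
    ∑ i, finsuppRegularMap k G (f i) ≫ finsuppRegularMap k G (LinearMap.single k (fun _ => B) i) =
      finsuppRegularMap k G (LinearMap.pi f) := by
  refine Rep.hom_ext (DFunLike.ext _ _ fun m => Finsupp.ext (M := ι → B) fun g =>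
    funext fun i => ?_)
  rw [sum_hom, Representation.IntertwiningMap.sum_apply]
  refine (congr_fun (Finsupp.finsetSum_apply Finset.univ (N := ι → B) (fun i =>
    (finsuppRegularMap k G (f i) ≫ finsuppRegularMap k G (LinearMap.single k (fun _ => B) i)).hom m)
    g) i).trans ?_
  rw [Finset.sum_apply]
  exact (Finset.sum_eq_single i (fun j _ hj => Pi.single_eq_of_ne' hj _) (by simp)).trans
    (Pi.single_eq_same i _)

/-- A function with finite support on an infinite group which is invariant under a generating set
vanishes. -/
lemma finsuppRegular_eq_zero [Infinite G] {S : Set G} (hS : Subgroup.closure S = ⊤)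
    (f : finsuppRegular k G A) (hf : ∀ s ∈ S, (finsuppRegular k G A).ρ s f = f) : f = 0 := by
  have h (g : G) : (finsuppRegular k G A).ρ g f = f := by
    have hg : g ∈ Subgroup.closure S := hS ▸ Subgroup.mem_top g
    induction hg using Subgroup.closure_induction with
    | mem s hs => exact hf s hs
    | one => simp only [map_one, Module.End.one_apply]
    | mul a b _ _ ha hb => rw [map_mul, Module.End.mul_apply, hb, ha]
    | inv a _ ha =>
      nth_rw 1 [← ha]
      exact (finsuppRegular k G A).ρ.inv_self_apply a f
  have hconst (g : G) : (f : G →₀ A) g = (f : G →₀ A) 1 := by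
    refine (DFunLike.congr_fun (h g) g).symm.trans ((finsuppRegular_ρ_apply g g f).trans ?_)
    rw [inv_mul_cancel]
  obtain ⟨g, hg⟩ := Infinite.exists_notMem_finset (f : G →₀ A).support
  rw [Finsupp.notMem_support_iff, hconst] at hg
  exact Finsupp.ext fun g => (hconst g).trans hg

variable (k A) in
/-- For `G = N × K`, the restriction to `N` of the representation on `G →₀ A` is the
representation on `N →₀ (K →₀ A)`. -/
noncomputable def resFinsuppRegularIso (hc : N.IsComplement' K) :
    res N.subtype (finsuppRegular k G A) ≅ finsuppRegular k N (K →₀ A) :=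
  mkIso <| .mk (Finsupp.domLCongr (Equiv.ofBijective _ hc).symm ≪≫ₗ Finsupp.curryLinearEquiv k)
    fun n => LinearMap.ext fun f => Finsupp.ext fun m => Finsupp.ext fun x =>
      congr_arg f (mul_assoc (n⁻¹ : G) m x).symm

/-- The action of an element commuting with `N` on the restriction of a representation to `N`. -/
noncomputable def resAction (M : Rep.{u} k G) (s : G) (hs : ∀ n ∈ N, Commute n s) :
    res N.subtype M ⟶ res N.subtype M :=
  ofHom ⟨M.ρ s, fun n => by
    refine (map_mul M.ρ s n).symm.trans (.trans ?_ (map_mul M.ρ (n : G) s))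
    rw [(hs n n.2).eq]⟩

lemma resAction_sub_id_comp_resFinsuppRegularIso_hom (hc : N.IsComplement' K) (s : K)
    (hs : ∀ n ∈ N, Commute n (s : G)) :
    (resAction (finsuppRegular k G A) s hs - 𝟙 _) ≫ (resFinsuppRegularIso k A hc).hom =
      (resFinsuppRegularIso k A hc).hom ≫
        finsuppRegularMap k N ((finsuppRegular k K A).ρ s - LinearMap.id) := by
  refine Rep.hom_ext (DFunLike.ext _ _ fun (m : G →₀ A) => Finsupp.ext (M := K →₀ A) fun n =>
    Finsupp.ext fun x => ?_)
  have h : ((s : G)⁻¹ * (n * x)) = n * ((s⁻¹ : K) * x : K) := by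
    rw [← mul_assoc, ← (hs n n.2).inv_right.eq, Subgroup.coe_mul, Subgroup.coe_inv, mul_assoc]
  exact congr(m $h - m (n * x))

lemma toCoindRes_comp_coindMap_resAction (M : Rep.{u} k G) (s : G) (hs : ∀ n ∈ N, Commute n s) :
    toCoindRes N M ≫ coindMap N.subtype (resAction M s hs) =
      toCoindRes N M ≫ coindTranslate (res N.subtype M) s hs := by
  ext m g
  exact congr($(map_mul M.ρ s g) m).symm

end Rep

namespace groupCohomology

open Rep

variable {k G : Type u} [CommRing k] [Group G] {N K : Subgroup G}

variable (k G) in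
/-- The cohomology of `G` with coefficients in all representations of the form `G →₀ A` vanishes
in degrees below `n`. -/
def RegularVanishing (n : ℕ) : Prop :=
  ∀ (A : Type u) [AddCommGroup A] [Module k A], ∀ p < n,
    Subsingleton (groupCohomology (finsuppRegular k G A) p)

lemma map_coindMap_resAction_toCoindRes (M : Rep.{u} k G) (s : G) (hs : ∀ n ∈ N, Commute n s)
    (n : ℕ) (x : groupCohomology M n) :
    map (MonoidHom.id G) (coindMap N.subtype (resAction M s hs)) n
        (map (MonoidHom.id G) (toCoindRes N M) n x) =
      map (MonoidHom.id G) (toCoindRes N M) n x := by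
  refine (map_id_comp_apply _ _ n x).symm.trans ?_
  refine (congr_arg (fun f => map (MonoidHom.id G) f n x)
    (toCoindRes_comp_coindMap_resAction M s hs)).trans ?_
  exact (map_id_comp_apply _ _ n x).trans (map_coindTranslate s hs _ n _)

lemma map_coindMap_injective {P : Rep k N} {B C : Type u} [AddCommGroup B]
    [Module k B] [AddCommGroup C] [Module k C] (e : P ≅ finsuppRegular k N B) (f : B →ₗ[k] C)
    (hf : Function.Injective f) {n : ℕ} (h : RegularVanishing k N n) :
    Function.Injective (map (MonoidHom.id G) (A := coind N.subtype P)
      (coindMap N.subtype (e.hom ≫ finsuppRegularMap k N f)) n) := by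
  have hcomp : coindMap N.subtype (e.hom ≫ finsuppRegularMap k N f) =
    coindMap N.subtype e.hom ≫ coindMap N.subtype (finsuppRegularMap k N f) := rfl
  have h₁ := map_f_injective (coind_map_shortExact N (finsuppRegular_shortExact k N f hf))
    fun i hi => subsingleton_coind (h _ i hi)
  have h₂ : Function.Injective (map (MonoidHom.id G) (A := coind N.subtype P)
      (coindMap N.subtype e.hom) n) :=
    ((functor k G n).mapIso ((coindFunctor k N.subtype).mapIso e)).toLinearEquiv.injective
  intro x y hxy
  rw [hcomp, map_id_comp_apply, map_id_comp_apply] at hxy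
  exact h₂ (h₁ hxy)

/-- If `G` is the internal direct product of `N` and an infinite finitely generated group `K`, then
the range of vanishing of cohomology with coefficients in regular representations is larger for
`G` than for `N`. -/
theorem RegularVanishing.of_isComplement' [Infinite K] [hK : Group.FG K]
    (hcomm : ∀ n ∈ N, ∀ x ∈ K, Commute n x) (hc : N.IsComplement' K) {n : ℕ}
    (h : RegularVanishing k N n) : RegularVanishing k G (n + 1) := by
  intro A _ _ p hp
  have hres : ∀ p < n,
      Subsingleton (groupCohomology (res N.subtype (finsuppRegular k G A)) p) := fun p hp =>
    subsingleton_of_iso (resFinsuppRegularIso k A hc).symm (h _ p hp)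
  obtain hp | rfl := Nat.lt_succ_iff_lt_or_eq.1 hp
  · exact subsingleton_of_res hcomm hc n _ hres p hp
  classical
  obtain ⟨S, hS⟩ := hK.out
  have hs (s : S) : ∀ n ∈ N, Commute n (s : K) := fun n hn => hcomm n hn _ s.1.2
  let M := finsuppRegular k G A
  let e := resFinsuppRegularIso k A hc
  let τ : (K →₀ A) →ₗ[k] (S → K →₀ A) :=
    LinearMap.pi fun s => (finsuppRegular k K A).ρ s - LinearMap.id
  have hτ : Function.Injective τ := (injective_iff_map_eq_zero τ).2 fun f hf =>
    finsuppRegular_eq_zero hS f fun s hs => sub_eq_zero.1 (congr_fun hf ⟨s, hs⟩)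
  have hsum : ∑ s : S, (resAction M (s : K) (hs s) - 𝟙 _) ≫
      (e.hom ≫ finsuppRegularMap k N (LinearMap.single k (fun _ => K →₀ A) s)) =
      e.hom ≫ finsuppRegularMap k N τ := by
    rw [← sum_finsuppRegularMap_comp_single, Preadditive.comp_sum]
    refine Finset.sum_congr rfl fun s _ => ?_
    rw [← Category.assoc, ← Category.assoc, resAction_sub_id_comp_resFinsuppRegularIso_hom]
  refine subsingleton_of_forall_eq 0 fun x => map_toCoindRes_injective hcomm hc p M hres ?_
  refine map_coindMap_injective e τ hτ h ?_
  rw [map_zero, map_zero, ← hsum]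
  exact map_sum_sub_id_comp_eq_zero _ _ p _ fun s =>
    map_coindMap_resAction_toCoindRes M (s : K) (hs s) p x

lemma RegularVanishing.of_mulEquiv {k G H : Type u} [CommRing k] [Group G] [Group H] (e : G ≃* H)
    {n : ℕ} (h : RegularVanishing k G n) : RegularVanishing k H n := fun A _ _ p hp =>
  have := h A p hp
  (mapIso (B := finsuppRegular k H A) (A := finsuppRegular k G A) e.symm
    (Finsupp.domLCongr e.symm.toEquiv) (fun g => by
      ext1 a
      refine LinearMap.ext fun b => Finsupp.ext fun c => ?_
      simp [finsuppRegular, Finsupp.domLCongr]) p).toLinearEquiv.toEquiv.subsingleton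

lemma isComplement_ker_evalMonoidHom_range_mulSingle {ι : Type*} [DecidableEq ι] (G : ι → Type*)
    [∀ i, Group (G i)] (i : ι) :
    (Pi.evalMonoidHom G i).ker.IsComplement' (MonoidHom.mulSingle G i).range := by
  refine Subgroup.isComplement'_of_disjoint_and_mul_eq_univ ?_ ?_
  · rw [Subgroup.disjoint_def]
    rintro _ hx ⟨y, rfl⟩
    have : y = 1 := by simpa using hx
    simp [this]
  · refine Set.eq_univ_of_forall fun g => Set.mem_mul.2
      ⟨g * (Pi.mulSingle i (g i))⁻¹, ?_, Pi.mulSingle i (g i), ⟨g i, rfl⟩, by simp⟩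
    simp

lemma commute_of_mem_ker_evalMonoidHom {ι : Type*} [DecidableEq ι] {G : ι → Type*}
    [∀ i, Group (G i)] {i : ι} {g h : ∀ i, G i} (hg : g ∈ (Pi.evalMonoidHom G i).ker)
    (hh : h ∈ (MonoidHom.mulSingle G i).range) : Commute g h := by
  obtain ⟨x, rfl⟩ := hh
  ext j
  obtain rfl | hj := eq_or_ne j i
  · have : g j = 1 := hg
    simp [this]
  · simp [Pi.mulSingle_eq_of_ne hj]

/-- The families with trivial entry at `0` form the product of the remaining factors. -/
def kerEvalZeroMulEquiv {n : ℕ} (G : Fin (n + 1) → Type*) [∀ i, Group (G i)] :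
    (∀ i, G (Fin.succ i)) ≃* (Pi.evalMonoidHom G 0).ker where
  toFun g := ⟨Fin.cons 1 g, rfl⟩
  invFun g i := g.1 i.succ
  left_inv g := rfl
  right_inv g := Subtype.ext <| by
    conv_rhs => rw [← Fin.cons_self_tail g.1, show g.1 0 = 1 from g.2]
    rfl
  map_mul' g h := Subtype.ext <| funext <| Fin.cases (mul_one 1).symm fun _ => rfl

/-- The cohomology of a product of `n` infinite finitely generated groups with coefficients in
regular representations vanishes in degrees below `n`. -/
theorem RegularVanishing.pi {k : Type u} [CommRing k] {n : ℕ} (G : Fin n → Type u)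
    [∀ i, Group (G i)] [∀ i, Infinite (G i)] [∀ i, Group.FG (G i)] :
    RegularVanishing k (∀ i, G i) n := by
  induction n with
  | zero => exact fun _ _ _ p hp => absurd hp p.not_lt_zero
  | succ n ih =>
    have e := MonoidHom.ofInjective (f := MonoidHom.mulSingle G 0) (Pi.mulSingle_injective 0)
    have : Infinite (MonoidHom.mulSingle G 0).range := e.toEquiv.infinite_iff.1 inferInstance
    exact .of_isComplement' (fun _ hg _ => commute_of_mem_ker_evalMonoidHom hg)
      (isComplement_ker_evalMonoidHom_range_mulSingle G 0)
      (.of_mulEquiv (kerEvalZeroMulEquiv G) (ih fun i => G i.succ))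

/-- The left regular representation as a representation on finitely supported functions. -/
noncomputable def finsuppRegularIsoLeftRegular (k G : Type u) [CommRing k] [Group G] :
    finsuppRegular k G k ≅ leftRegular k G :=
  Rep.mkIso <| .mk (MonoidAlgebra.coeffLinearEquiv k).symm fun g => by
    ext1 a
    refine LinearMap.ext fun b => ?_
    ext c
    simp

end groupCohomology

namespace Representation

lemma mem_ker_toSpanSingleton {k G V : Type*} [CommRing k] [Monoid G] [AddCommGroup V] [Module k V]
    (ρ : Representation k G V) (v : V) (r : MonoidAlgebra k G) :
    r ∈ (LinearMap.toSpanSingleton (MonoidAlgebra k G) ρ.asModule (ρ.asModuleEquiv.symm v)).ker ↔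
      ρ.asAlgebraHom r v = 0 := by
  rw [LinearMap.mem_ker, LinearMap.toSpanSingleton_apply, ← ρ.asModuleEquiv.map_eq_zero_iff,
    asModuleEquiv_map_smul, LinearEquiv.apply_symm_apply]

variable (k G : Type*) [CommRing k] [Group G]

lemma exists_sub_single_mem_span (r : MonoidAlgebra k G) :
    ∃ c : k, r - .single 1 c ∈
      Submodule.span (MonoidAlgebra k G) (Set.range fun g : G => MonoidAlgebra.of k G g - 1) := by
  induction r using MonoidAlgebra.induction_on with
  | of g => exact ⟨1, Submodule.subset_span ⟨g, rfl⟩⟩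
  | add x y hx hy =>
    obtain ⟨c, hc⟩ := hx
    obtain ⟨d, hd⟩ := hy
    refine ⟨c + d, ?_⟩
    rw [MonoidAlgebra.single_add, add_sub_add_comm]
    exact add_mem hc hd
  | smul a x hx =>
    obtain ⟨c, hc⟩ := hx
    refine ⟨a * c, ?_⟩
    have := Submodule.smul_of_tower_mem _ a hc
    rwa [smul_sub, MonoidAlgebra.smul_single, smul_eq_mul] at this

lemma ker_toSpanSingleton_trivial :
    (LinearMap.toSpanSingleton (MonoidAlgebra k G) (trivial k G k).asModule
      ((trivial k G k).asModuleEquiv.symm 1)).ker =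
      Submodule.span (MonoidAlgebra k G) (Set.range fun g : G => MonoidAlgebra.of k G g - 1) := by
  have hle : Submodule.span (MonoidAlgebra k G)
      (Set.range fun g : G => MonoidAlgebra.of k G g - 1) ≤
      (LinearMap.toSpanSingleton (MonoidAlgebra k G) (trivial k G k).asModule
      ((trivial k G k).asModuleEquiv.symm 1)).ker := by
    rw [Submodule.span_le]
    rintro _ ⟨g, rfl⟩
    rw [SetLike.mem_coe, mem_ker_toSpanSingleton]
    simp
  refine le_antisymm (fun r hr => ?_) hle
  obtain ⟨c, hc⟩ := exists_sub_single_mem_span k G r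
  have h0 := sub_mem hr (hle hc)
  rw [sub_sub_cancel, mem_ker_toSpanSingleton] at h0
  have : c = 0 := by simpa using h0
  simpa [this] using hc

lemma toSpanSingleton_trivial_surjective : Function.Surjective
    (LinearMap.toSpanSingleton (MonoidAlgebra k G) (trivial k G k).asModule
      ((trivial k G k).asModuleEquiv.symm 1)) := fun x =>
  ⟨.single 1 ((trivial k G k).asModuleEquiv x), (trivial k G k).asModuleEquiv.injective <| by
    rw [LinearMap.toSpanSingleton_apply, asModuleEquiv_map_smul, LinearEquiv.apply_symm_apply]
    simp⟩

lemma asAlgebraHom_ofMulAction_quotient_of_sub_one [Nontrivial k] (H : Subgroup G) (h : G) :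
    (ofMulAction k G (G ⧸ H)).asAlgebraHom (MonoidAlgebra.of k G h - 1)
      (.single ((1 : G) : G ⧸ H) 1) = 0 ↔ h ∈ H := by
  have : (h : G ⧸ H) = ((1 : G) : G ⧸ H) ↔ h ∈ H := by
    rw [eq_comm, QuotientGroup.eq, inv_one, one_mul]
  rw [← this]
  simp [sub_eq_zero, MonoidAlgebra.single_left_inj]

/-- A group whose trivial module is finitely presented is finitely generated. -/
lemma _root_.Group.fg_of_finitePresentation_trivial [Nontrivial k]
    [Module.FinitePresentation (MonoidAlgebra k G) (trivial k G k).asModule] : Group.FG G := by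
  classical
  have hfg := Module.FinitePresentation.fg_ker _ (toSpanSingleton_trivial_surjective k G)
  rw [ker_toSpanSingleton_trivial, Submodule.fg_span_iff_fg_span_finset_subset] at hfg
  obtain ⟨s, hs, hspan⟩ := hfg
  rw [← Set.image_univ, Finset.subset_set_image_iff] at hs
  obtain ⟨T, -, rfl⟩ := hs
  refine ⟨T, eq_top_iff.2 fun g _ => ?_⟩
  rw [← asAlgebraHom_ofMulAction_quotient_of_sub_one k, ← mem_ker_toSpanSingleton]
  refine (?_ : Submodule.span (MonoidAlgebra k G)
    (Set.range fun g : G => MonoidAlgebra.of k G g - 1) ≤ _) (Submodule.subset_span ⟨g, rfl⟩)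
  rw [hspan, Submodule.span_le]
  intro x hx
  obtain ⟨t, ht, rfl⟩ := Finset.mem_image.1 hx
  rw [SetLike.mem_coe, mem_ker_toSpanSingleton, asAlgebraHom_ofMulAction_quotient_of_sub_one]
  exact Subgroup.subset_closure ht

end Representation

/-- The trivial module of a group of type `FP∞` is finitely presented. -/
theorem IsFPInfinity.finitePresentation_trivial {G : Type} [Group G] (h : IsFPInfinity G) :
    Module.FinitePresentation (MonoidAlgebra ℤ G) (Representation.trivial ℤ G ℤ).asModule := by
  obtain ⟨P, h⟩ := h
  let F : Rep ℤ G ⥤ ModuleCat (MonoidAlgebra ℤ G) := Rep.equivalenceModuleMonoidAlgebra.functor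
  have hex := P.exact₀.map F
  rw [ShortComplex.moduleCat_exact_iff_range_eq_ker] at hex
  have h₀ := h 0
  have h₁ := h 1
  have : Module.Projective (MonoidAlgebra ℤ G) (F.obj (P.complex.X 0)) :=
    (IsProjective.iff_projective _).2
      ((Rep.equivalenceModuleMonoidAlgebra.map_projective_iff _).2 (P.projective 0))
  have : Module.FinitePresentation (MonoidAlgebra ℤ G) (F.obj (P.complex.X 0)) :=
    Module.finitePresentation_of_projective ..
  refine Module.finitePresentation_of_surjective (M := F.obj (P.complex.X 0))
    (F.map (P.π.f 0)).hom ((ModuleCat.epi_iff_surjective _).1 inferInstance) (hex ▸ ?_)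
  exact Module.Finite.iff_fg.1 (Module.Finite.range (F.map (P.complex.d 1 0)).hom)

/-- Groups of type `FP∞` are finitely generated. -/
theorem IsFPInfinity.group_fg {G : Type} [Group G] (h : IsFPInfinity G) : Group.FG G :=
  have := h.finitePresentation_trivial
  Group.fg_of_finitePresentation_trivial ℤ G

/-- If `G = G₁ × ⋯ × G_n` is a product of `n ≥ 1` infinite groups of type `FP∞`,
then `H^p(G, ℤ[G]) = 0` for all `p ≤ n - 1`. -/
theorem stmt_10 (n : ℕ) (hn : 1 ≤ n) (G : Fin n → Type)
    [inst : ∀ i, Group (G i)] [∀ i, Infinite (G i)]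
    (hFP : ∀ i, IsFPInfinity (G i)) :
    ∀ p : ℕ, p ≤ n - 1 →
      Subsingleton (groupCohomology
        (Rep.ofMulAction ℤ (∀ i, G i) (∀ i, G i)) p) := by
  have (i : Fin n) : Group.FG (G i) := (hFP i).group_fg
  exact fun p hp => groupCohomology.subsingleton_of_iso
    (groupCohomology.finsuppRegularIsoLeftRegular ℤ (∀ i, G i))
    (groupCohomology.RegularVanishing.pi G ℤ p (by omega))
end

section
/- Group cohomology of a group G of type FP∞ commutes with direct limits (filtered colimits) in the coefficient module: H^n(G, colim_i M_i) ≅ colim_i H^n(G, M_i) for every filtered system of ℤ[G]-modules M_i and every n. -/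
open CategoryTheory CategoryTheory.Limits

/-- The functor `M ↦ Hⁿ(G, M)` on coefficient modules, realized as
`Extⁿ_{ℤ[G]}(ℤ, -)`; it agrees with `groupCohomology` by `groupCohomologyIsoExt`. -/
noncomputable def cohomologyFunctor (G : Type) [Group G] (n : ℕ) :
    Rep ℤ G ⥤ ModuleCat ℤ :=
  (Ext ℤ (Rep ℤ G) n).obj (Opposite.op (Rep.trivial ℤ G ℤ))

section

open Opposite

universe v u

attribute [local instance] Cardinal.fact_isRegular_aleph0

theorem ModuleCat.isFinitelyPresentable_free {R : Type u} [Ring R] (X : Type u) [Finite X] :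
    IsFinitelyPresentable.{u} ((ModuleCat.free R).obj X) := by
  have : IsCardinalPresentable X Cardinal.aleph0.{u} :=
    (hasCardinalLT_of_finite X _ le_rfl).isCardinalPresentable
  have : (forget (ModuleCat.{u} R)).IsCardinalAccessible Cardinal.aleph0.{u} :=
    Functor.isFinitelyAccessible_iff_preservesFilteredColimits.2 inferInstance
  exact (ModuleCat.adj R).isCardinalPresentable_leftAdjoint_obj _ X

theorem ModuleCat.isFinitelyPresentable_of_projective {R : Type u} [Ring R] (M : ModuleCat.{u} R)
    [Module.Finite R M] [Module.Projective R M] : IsFinitelyPresentable.{u} M := by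
  obtain ⟨n, f, g, -, -, hfg⟩ := Module.Finite.exists_comp_eq_id_of_projective R M
  have := ModuleCat.isFinitelyPresentable_free (R := R) (ULift.{u} (Fin n))
  let e : (ULift.{u} (Fin n) →₀ R) ≃ₗ[R] (Fin n → R) :=
    (Finsupp.domLCongr Equiv.ulift).trans (Finsupp.linearEquivFunOnFinite R R (Fin n))
  let r : Retract M ((ModuleCat.free R).obj (ULift.{u} (Fin n))) :=
    { i := ModuleCat.ofHom (e.symm.toLinearMap ∘ₗ g)
      r := ModuleCat.ofHom (f ∘ₗ e.toLinearMap)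
      retract := by
        ext x
        simpa using! LinearMap.congr_fun hfg x }
  exact r.isCardinalPresentable _

theorem CategoryTheory.preservesColimitsOfShape_linearCoyoneda_obj {R : Type v} [Ring R]
    {C : Type u} [Category.{v} C] [Preadditive C] [Linear R C] (X : C)
    [IsFinitelyPresentable.{v} X] (J : Type v) [SmallCategory J] [IsFiltered J] :
    PreservesColimitsOfShape J ((linearCoyoneda R C).obj (op X)) := by
  have : PreservesColimitsOfShape J
      ((linearCoyoneda R C).obj (op X) ⋙ forget (ModuleCat.{v} R)) :=
    inferInstanceAs (PreservesColimitsOfShape J (coyoneda.obj (op X)))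
  have : ReflectsColimitsOfShape J (forget (ModuleCat.{v} R)) :=
    reflectsColimitsOfShape_of_reflectsIsomorphisms
  exact preservesColimitsOfShape_of_reflects_of_preserves _ (forget (ModuleCat.{v} R))

/-- The functor sending `Y` to the cochain complex `Hom(X, Y)`. -/
@[simps]
noncomputable def ChainComplex.linearYonedaFunctor {α : Type*} [AddRightCancelSemigroup α] [One α]
    (R : Type*) [Ring R] {C : Type*} [Category* C] [Preadditive C] [Linear R C]
    (X : ChainComplex C α) : C ⥤ CochainComplex (ModuleCat R) α where
  obj Y := ((((linearYoneda R C).obj Y).rightOp.mapHomologicalComplex _).obj X).unop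
  map f := (HomologicalComplex.unopFunctor _ _).map
    ((NatTrans.mapHomologicalComplex (NatTrans.rightOp ((linearYoneda R C).map f)) _).app X).op

theorem ChainComplex.preservesColimitsOfShape_linearYonedaFunctor {α : Type*}
    [AddRightCancelSemigroup α] [One α] (R : Type v) [Ring R] {C : Type u} [Category.{v} C]
    [Preadditive C] [Linear R C] (X : ChainComplex C α) [∀ i, IsFinitelyPresentable.{v} (X.X i)]
    (J : Type v) [SmallCategory J] [IsFiltered J] :
    PreservesColimitsOfShape J (X.linearYonedaFunctor R) :=
  HomologicalComplex.preservesColimitsOfShape_of_eval _ fun i =>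
    have := preservesColimitsOfShape_linearCoyoneda_obj (R := R) (X.X i) J
    preservesColimitsOfShape_of_natIso
      (F := (linearCoyoneda R C).obj (op (X.X i)))
      (NatIso.ofComponents (fun _ => Iso.refl _))

theorem HomologicalComplex.homologyUnop_hom_naturality {V : Type*} [Category* V]
    [HasZeroMorphisms V] {ι : Type*} {c : ComplexShape ι} {K L : HomologicalComplex Vᵒᵖ c}
    (φ : K ⟶ L) (i : ι) [K.HasHomology i] [L.HasHomology i] :
    homologyMap ((unopFunctor V c).map φ.op) i ≫ (K.homologyUnop i).hom =
      (L.homologyUnop i).hom ≫ (homologyMap φ i).unop :=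
  (congrArg Quiver.Hom.unop (homologyOp_hom_naturality ((unopFunctor V c).map φ.op) i)).symm

theorem CategoryTheory.Iso.comp_inv_comp_inv_eq {C : Type*} [Category* C] {A A' B B' D D' : C}
    (i : B ≅ A) (i' : B' ≅ A') (j : D ≅ B) (j' : D' ≅ B') {f : A ⟶ A'} {g : B ⟶ B'} {h : D ⟶ D'}
    (hf : f = (i.inv ≫ g) ≫ i'.hom) (hg : h ≫ j'.hom = j.hom ≫ g) :
    f ≫ i'.inv ≫ j'.inv = (i.inv ≫ j.inv) ≫ h := by
  simp [hf, ← cancel_mono j'.hom, hg]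

/-- `Extⁿ(X, -)` is computed, naturally in the second variable, by a projective resolution
of `X`. -/
noncomputable def CategoryTheory.ProjectiveResolution.extFunctorIso {R : Type*} [Ring R]
    {C : Type*} [Category* C] [Abelian C] [Linear R C] [EnoughProjectives C] {X : C}
    (P : ProjectiveResolution X) (n : ℕ) :
    (Ext R C n).obj (op X) ≅
      P.complex.linearYonedaFunctor R ⋙ HomologicalComplex.homologyFunctor _ _ n :=
  NatIso.ofComponents (fun Y => P.isoExt n Y) fun {Y Z} f => by
    let τ := NatTrans.rightOp ((linearYoneda R C).map f)
    let φ := (NatTrans.mapHomologicalComplex τ (ComplexShape.down ℕ)).app P.complex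
    let i (Y : C) := (P.isoLeftDerivedObj ((linearYoneda R C).obj Y).rightOp n).unop
    have h₁ : ((NatTrans.leftDerived τ n).app X).unop =
        ((i Y).inv ≫ (HomologicalComplex.homologyMap φ n).unop) ≫ (i Z).hom :=
      (congrArg Quiver.Hom.unop (P.leftDerived_app_eq τ n)).trans (Category.assoc _ _ _).symm
    have h₂ := HomologicalComplex.homologyUnop_hom_naturality φ n
    exact Iso.comp_inv_comp_inv_eq (i Y) (i Z) (HomologicalComplex.homologyUnop _ n)
      (HomologicalComplex.homologyUnop _ n) h₁ h₂

/-- Homology of short complexes commutes with exact colimits. -/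
noncomputable def CategoryTheory.ShortComplex.colimitCompHomologyFunctorIso
    {C : Type*} [Category* C] [Abelian C] {J : Type*} [Category* J] [HasColimitsOfShape J C]
    [HasExactColimitsOfShape J C] (G : J ⥤ ShortComplex C) :
    colimit (G ⋙ ShortComplex.homologyFunctor C) ≅ (colimit G).homology := by
  let S := (ShortComplex.FunctorEquivalence.inverse J C).obj G
  let α : G ⋙ ShortComplex.homologyFunctor C ≅ S.homology :=
    Functor.isoWhiskerRight ((ShortComplex.FunctorEquivalence.counitIso J C).app G).symm
        (ShortComplex.homologyFunctor C) ≪≫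
      NatIso.ofComponents (fun j => S.mapHomologyIso ((evaluation J C).obj j))
        (fun {j k} f =>
          (Iso.eq_comp_inv (S.mapHomologyIso ((evaluation J C).obj k))).1
            ((ShortComplex.homologyMap_mapNatTrans S ((evaluation J C).map f)).trans
              (Category.assoc _ _ _).symm))
  exact colim.mapIso α ≪≫ (S.mapHomologyIso colim).symm ≪≫
    ShortComplex.homologyMapIso
      ((ShortComplex.isColimitColimitCocone G).coconePointUniqueUpToIso (colimit.isColimit G))

theorem HomologicalComplex.preservesColimitsOfShape_shortComplexFunctor (C : Type*) [Category* C]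
    [HasZeroMorphisms C] {ι : Type*} (c : ComplexShape ι) (i : ι) (J : Type*) [Category* J]
    [HasColimitsOfShape J C] : PreservesColimitsOfShape J (shortComplexFunctor C c i) where
  preservesColimit := ⟨fun hs => ⟨ShortComplex.isColimitOfIsColimitπ _
    (isColimitOfPreserves (eval C c (c.prev i)) hs)
    (isColimitOfPreserves (eval C c i) hs)
    (isColimitOfPreserves (eval C c (c.next i)) hs)⟩⟩

theorem HomologicalComplex.nonempty_colimit_compHomologyFunctor_iso {C D : Type*} [Category* C]
    [Category* D] [Abelian D] {ι : Type*} (c : ComplexShape ι) (i : ι) {J : Type*} [Category* J]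
    [HasColimitsOfShape J D] [HasExactColimitsOfShape J D] (F : J ⥤ C) [HasColimit F]
    (K : C ⥤ HomologicalComplex D c) [PreservesColimit F K] :
    Nonempty (colimit (F ⋙ K ⋙ homologyFunctor D c i) ≅ (K.obj (colimit F)).homology i) := by
  have := preservesColimitsOfShape_shortComplexFunctor D c i J
  exact ⟨HasColimit.isoOfNatIso
      (Functor.isoWhiskerLeft (F ⋙ K) (homologyFunctorIso D c i)) ≪≫
    ShortComplex.colimitCompHomologyFunctorIso (F ⋙ K ⋙ shortComplexFunctor D c i) ≪≫
    ShortComplex.homologyMapIso (preservesColimitIso (K ⋙ shortComplexFunctor D c i) F).symm⟩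

theorem Rep.isFinitelyPresentable_of_projective {k G : Type u} [CommRing k] [Group G]
    (X : Rep.{u} k G) [Projective X]
    [Module.Finite (MonoidAlgebra k G) (equivalenceModuleMonoidAlgebra.functor.obj X)] :
    IsFinitelyPresentable.{u} X := by
  have : Projective (equivalenceModuleMonoidAlgebra.functor.obj X) :=
    (equivalenceModuleMonoidAlgebra.map_projective_iff _).2 inferInstance
  have := (IsProjective.iff_projective _).2 this
  exact (isCardinalPresentable_iff_of_isEquivalence _ Cardinal.aleph0.{u}
    equivalenceModuleMonoidAlgebra.functor).1
      (ModuleCat.isFinitelyPresentable_of_projective _)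

theorem CategoryTheory.Linear.subsingleton_int (C : Type*) [Category* C] [Preadditive C] :
    Subsingleton (Linear ℤ C) where
  allEq a b := by
    obtain ⟨h, _, _⟩ := a
    obtain ⟨h', _, _⟩ := b
    obtain rfl : h = h' := by ext X Y : 2; exact Subsingleton.elim _ _
    rfl

/-- `cohomologyFunctor` is formed with the `ℤ`-linear structure that every preadditive category
carries, `groupCohomologyIsoExt` with that of `Rep ℤ G`; the two structures are equal. -/
theorem nonempty_groupCohomology_iso_cohomologyFunctor_obj {G : Type} [Group G] (A : Rep ℤ G)
    (n : ℕ) : Nonempty (groupCohomology A n ≅ (cohomologyFunctor G n).obj A) := by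
  have := Linear.subsingleton_int (Rep.{0} ℤ G)
  have h : Linear.preadditiveIntLinear (C := Rep.{0} ℤ G) = Rep.instLinear :=
    Subsingleton.elim _ _
  unfold cohomologyFunctor
  rw [h]
  exact ⟨groupCohomologyIsoExt A n⟩

end

/-- Group cohomology of a group of type `FP∞` commutes with filtered colimits in the
coefficient module: for every filtered system `F` of `ℤ[G]`-modules,
`Hⁿ(G, colim F) ≅ colim Hⁿ(G, F)`. -/
theorem stmt_11 (G : Type) [Group G] (hFP : IsFPInfinity G)
    (J : Type) [SmallCategory J] [IsFiltered J] (F : J ⥤ Rep ℤ G) (n : ℕ) :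
    Nonempty (groupCohomology (colimit F) n ≅ colimit (F ⋙ cohomologyFunctor G n)) := by
  obtain ⟨P, hP⟩ := hFP
  have (i : ℕ) := have := hP i; Rep.isFinitelyPresentable_of_projective (P.complex.X i)
  have := P.complex.preservesColimitsOfShape_linearYonedaFunctor ℤ J
  obtain ⟨α⟩ := HomologicalComplex.nonempty_colimit_compHomologyFunctor_iso _ n F
    (P.complex.linearYonedaFunctor ℤ)
  let e : cohomologyFunctor G n ≅ _ := P.extFunctorIso n
  obtain ⟨ε⟩ := nonempty_groupCohomology_iso_cohomologyFunctor_obj (colimit F) n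
  exact ⟨ε ≪≫ e.app (colimit F) ≪≫ α.symm ≪≫
    HasColimit.isoOfNatIso (Functor.isoWhiskerLeft F e.symm)⟩
end
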